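/- Let C be a nonempty bounded closed convex subset of a real Hilbert space H and T₁, …, T_m a finite family of metrically nonspreading mappings of C into itself (with the metric induced by the norm) such that T_j ∘ T_k = T_k ∘ T_j for all j, k ∈ {1, …, m}. Then the mappings T₁, …, T_m have a common fixed point, i.e., there exists p ∈ C with T_k p = p for all k ∈ {1, …, m}. -/

import Mathlib

/-!
The argument only uses the Bruhat–Tits midpoint inequality, so it takes place in a complete
metric space with midpoints in that sense. There a lower semicontinuous function which is uniformly
midpoint convex attains its minimum, with quadratic growth away from the minimizer. Applied to the
squared asymptotic radius of a bounded orbit of a nonspreading map `T`, this yields the asymptotic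
centre `p`. Passing to the upper limit in
`2 d(Tⁿ⁺¹x, Tp)² ≤ d(Tⁿ⁺¹x, p)² + d(Tⁿx, Tp)²` shows that `Tp` is as good a centre as `p`, so
`Tp = p`. The common fixed points of some of the maps form a closed set that contains the midpoints
of its points and, by commutativity, is invariant under the remaining maps; hence one map can be
treated at a time.
-/

open Filter Topology Set Function Bornology

theorem mapsTo_biInter_fixedPoints_of_commute {ι α : Type*} {T : ι → α → α} {S : α → α}
    {s : Set ι} (hcomm : ∀ k ∈ s, Function.Commute S (T k)) :
    MapsTo S (⋂ k ∈ s, fixedPoints (T k)) (⋂ k ∈ s, fixedPoints (T k)) :=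
  fun _ hx => mem_iInter₂.2 fun k hk => (mem_iInter₂.1 hx k hk).map (hcomm k hk)

section Pseudometric

variable {X : Type*} [PseudoMetricSpace X]

/-- `m` is a midpoint of `x` and `y` in the sense of the CN inequality of Bruhat and Tits. -/
def IsCNMidpoint (x y m : X) : Prop :=
  ∀ z, dist z m ^ 2 ≤ (dist z x ^ 2 + dist z y ^ 2) / 2 - dist x y ^ 2 / 4

variable (X) in
/-- Any two points have a midpoint in the sense of Bruhat and Tits. The complete metric spaces with
this property are the Hadamard spaces, i.e. the complete CAT(0) spaces. -/
def HasCNMidpoints : Prop :=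
  ∀ x y : X, ∃ m, IsCNMidpoint x y m

/-- Metrically nonspreading self-maps: the class of maps in the fixed point theorem. -/
def MetricallyNonspreading (T : X → X) : Prop :=
  ∀ x y, 2 * dist (T x) (T y) ^ 2 ≤ dist (T x) y ^ 2 + dist (T y) x ^ 2

/-- Quasi-nonexpansive self-maps: those which do not increase the distance to their fixed points.
A map without fixed points is allowed. -/
def QuasiNonexpansive (T : X → X) : Prop :=
  ∀ x, ∀ p ∈ fixedPoints T, dist (T x) p ≤ dist x p

/-- The asymptotic radius at `y` of a sequence `x`, whose minimizers are the asymptotic centres of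
`x`. It is meaningful only for bounded `x`, since the upper limit is taken in `ℝ`. -/
noncomputable def asymptoticRadius (x : ℕ → X) (y : X) : ℝ :=
  limsup (fun n => dist (x n) y) atTop

theorem exists_forall_add_sq_dist_le [CompleteSpace X] [Nonempty X] {f : X → ℝ}
    (hf : LowerSemicontinuous f) (hbdd : BddBelow (range f))
    (hmid : ∀ x y, ∃ m, f m ≤ (f x + f y) / 2 - dist x y ^ 2 / 4) :
    ∃ p, ∀ y, f p + dist y p ^ 2 / 2 ≤ f y := by
  set μ := sInf (range f)
  have hμ (y : X) : μ ≤ f y := csInf_le hbdd (mem_range_self y)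
  have sq_dist_le (x y : X) : dist x y ^ 2 ≤ 2 * (f x - μ) + 2 * (f y - μ) := by
    obtain ⟨m, hm⟩ := hmid x y
    linarith [hμ m]
  obtain ⟨v, hv_anti, hv, hv_mem⟩ := exists_seq_tendsto_sInf (range_nonempty f) hbdd
  choose u hu using hv_mem
  obtain rfl : f ∘ u = v := funext hu
  have hcauchy : CauchySeq u := by
    refine cauchySeq_of_le_tendsto_0 (fun N => √(4 * (f (u N) - μ))) (fun n k N hn hk => ?_) ?_
    · refine Real.le_sqrt_of_sq_le ((sq_dist_le _ _).trans ?_)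
      linarith [show f (u n) ≤ f (u N) from hv_anti hn, show f (u k) ≤ f (u N) from hv_anti hk]
    · simpa [μ] using ((hv.sub_const μ).const_mul 4).sqrt
  obtain ⟨p, hp⟩ := cauchySeq_tendsto_of_complete hcauchy
  have hpμ : f p ≤ μ := le_of_forall_lt_imp_le_of_dense fun c hc =>
    ge_of_tendsto hv ((hp.eventually (hf p c hc)).mono fun _ => le_of_lt)
  refine ⟨p, fun y => ?_⟩
  linarith [sq_dist_le y p, hμ p]

theorem limsup_le_of_eventually_le_midpoint {ι : Type*} {l : Filter ι} {u v w : ι → ℝ} {δ : ℝ}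
    (hu : l.IsBoundedUnder (· ≤ ·) u) (hv : l.IsBoundedUnder (· ≤ ·) v)
    (hw : l.IsCoboundedUnder (· ≤ ·) w) (h : ∀ᶠ i in l, w i ≤ (u i + v i) / 2 - δ) :
    limsup w l ≤ (limsup u l + limsup v l) / 2 - δ := by
  refine le_of_forall_pos_le_add fun ε hε => limsup_le_of_le hw ?_
  filter_upwards [h, eventually_lt_of_limsup_lt (lt_add_of_pos_right _ hε) hu,
    eventually_lt_of_limsup_lt (lt_add_of_pos_right _ hε) hv] with i hi hui hvi
  linarith

section AsymptoticRadius

variable {x : ℕ → X}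

theorem isBoundedUnder_dist_pow (hx : IsBounded (range x)) (y : X) (k : ℕ) :
    atTop.IsBoundedUnder (· ≤ ·) fun n => dist (x n) y ^ k := by
  obtain ⟨R, hR⟩ := (Metric.isBounded_iff_subset_closedBall y).1 hx
  exact isBoundedUnder_of ⟨R ^ k, fun n => by gcongr; exact hR (mem_range_self n)⟩

theorem isCoboundedUnder_dist_pow (x : ℕ → X) (y : X) (k : ℕ) :
    atTop.IsCoboundedUnder (· ≤ ·) fun n => dist (x n) y ^ k :=
  IsBoundedUnder.isCoboundedUnder_le (isBoundedUnder_of ⟨0, fun _ => by positivity⟩)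

theorem asymptoticRadius_nonneg (hx : IsBounded (range x)) (y : X) : 0 ≤ asymptoticRadius x y :=
  le_limsup_of_frequently_le (Frequently.of_forall fun _ => dist_nonneg)
    (by simpa using isBoundedUnder_dist_pow hx y 1)

theorem sq_asymptoticRadius (hx : IsBounded (range x)) (y : X) :
    asymptoticRadius x y ^ 2 = limsup (fun n => dist (x n) y ^ 2) atTop := by
  have hbdd := isBoundedUnder_dist_pow hx y 2
  have hnonneg : 0 ≤ limsup (fun n => dist (x n) y ^ 2) atTop :=
    le_limsup_of_frequently_le (Frequently.of_forall fun _ => sq_nonneg _) hbdd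
  have hsqrt := Real.sqrt_monotone.map_limsup_of_continuousAt (fun n => dist (x n) y ^ 2)
    Real.continuous_sqrt.continuousAt hbdd (isCoboundedUnder_dist_pow x y 2)
  simp only [comp_def, Real.sqrt_sq dist_nonneg] at hsqrt
  rw [asymptoticRadius, ← hsqrt, Real.sq_sqrt hnonneg]

theorem lipschitzWith_asymptoticRadius (hx : IsBounded (range x)) :
    LipschitzWith 1 (asymptoticRadius x) := by
  have hbdd (z : X) : atTop.IsBoundedUnder (· ≤ ·) fun n => dist (x n) z := by
    simpa using isBoundedUnder_dist_pow hx z 1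
  have hcobdd (z : X) : atTop.IsCoboundedUnder (· ≤ ·) fun n => dist (x n) z := by
    simpa using isCoboundedUnder_dist_pow x z 1
  refine LipschitzWith.of_le_add fun y z => ?_
  calc asymptoticRadius x y
      ≤ limsup (fun n => dist (x n) z + dist y z) atTop :=
        limsup_le_limsup (Eventually.of_forall fun n => dist_triangle_right _ _ _) (hcobdd y)
          (isBoundedUnder_le_add (hbdd z) isBoundedUnder_const)
    _ = asymptoticRadius x z + dist y z := limsup_add_const _ _ _ (hbdd z) (hcobdd z)

theorem IsCNMidpoint.sq_asymptoticRadius_le {y z m : X} (hm : IsCNMidpoint y z m)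
    (hx : IsBounded (range x)) :
    asymptoticRadius x m ^ 2 ≤
      (asymptoticRadius x y ^ 2 + asymptoticRadius x z ^ 2) / 2 - dist y z ^ 2 / 4 := by
  simp only [sq_asymptoticRadius hx]
  exact limsup_le_of_eventually_le_midpoint (isBoundedUnder_dist_pow hx y 2)
    (isBoundedUnder_dist_pow hx z 2) (isCoboundedUnder_dist_pow x m 2)
    (Eventually.of_forall fun n => hm (x n))

theorem HasCNMidpoints.exists_sq_asymptoticRadius_add_sq_dist_le [CompleteSpace X] [Nonempty X]
    (hX : HasCNMidpoints X) (hx : IsBounded (range x)) :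
    ∃ p, ∀ y, asymptoticRadius x p ^ 2 + dist y p ^ 2 / 2 ≤ asymptoticRadius x y ^ 2 :=
  exists_forall_add_sq_dist_le
    ((lipschitzWith_asymptoticRadius hx).continuous.pow 2).lowerSemicontinuous
    ⟨0, forall_mem_range.2 fun _ => sq_nonneg _⟩
    fun y z => (hX y z).imp fun _ hm => hm.sq_asymptoticRadius_le hx

end AsymptoticRadius

theorem MetricallyNonspreading.asymptoticRadius_map_le {T : X → X} {x : X}
    (hT : MetricallyNonspreading T) (hx : IsBounded (range fun n => T^[n] x)) (p : X) :
    asymptoticRadius (fun n => T^[n] x) (T p) ≤ asymptoticRadius (fun n => T^[n] x) p := by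
  have hbdd (y : X) := isBoundedUnder_dist_pow hx y 2
  have hshift (y : X) : limsup (fun n => dist (T^[n + 1] x) y ^ 2) atTop =
      limsup (fun n => dist (T^[n] x) y ^ 2) atTop :=
    limsup_nat_add (fun n => dist (T^[n] x) y ^ 2) 1
  have hstep (n : ℕ) : dist (T^[n + 1] x) (T p) ^ 2 ≤
      (dist (T^[n + 1] x) p ^ 2 + dist (T^[n] x) (T p) ^ 2) / 2 - 0 := by
    have := hT (T^[n] x) p
    rw [← iterate_succ_apply' T, dist_comm (T p)] at this
    linarith
  have hle := limsup_le_of_eventually_le_midpoint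
    ((tendsto_add_atTop_nat 1).isBoundedUnder_comp (hbdd p)) (hbdd (T p))
    (isCoboundedUnder_dist_pow (fun n => T^[n + 1] x) (T p) 2) (Eventually.of_forall hstep)
  simp only [comp_def, hshift, ← sq_asymptoticRadius hx] at hle
  exact le_of_sq_le_sq (by linarith) (asymptoticRadius_nonneg hx p)

theorem MetricallyNonspreading.quasiNonexpansive {T : X → X} (hT : MetricallyNonspreading T) :
    QuasiNonexpansive T := by
  intro x p hp
  have := hT x p
  rw [mem_fixedPoints_iff.1 hp, dist_comm p] at this
  exact le_of_sq_le_sq (by linarith) dist_nonneg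

theorem QuasiNonexpansive.isBounded_range_iterate {T : X → X} (hT : QuasiNonexpansive T) {p : X}
    (hp : p ∈ fixedPoints T) (x : X) : IsBounded (range fun n => T^[n] x) := by
  have hanti : Antitone fun n => dist (T^[n] x) p := antitone_nat_of_succ_le fun n => by
    simpa only [iterate_succ_apply'] using hT (T^[n] x) p hp
  exact Metric.isBounded_closedBall.subset (range_subset_iff.2 fun n => hanti n.zero_le)

end Pseudometric

section Metric

variable {X : Type*} [MetricSpace X]

theorem QuasiNonexpansive.isClosed_fixedPoints {T : X → X} (hT : QuasiNonexpansive T) :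
    IsClosed (fixedPoints T) := by
  refine IsSeqClosed.isClosed fun u q hu hq => ?_
  have hTq : Tendsto u atTop (𝓝 (T q)) := by
    rw [tendsto_iff_dist_tendsto_zero] at hq ⊢
    refine squeeze_zero (fun _ => dist_nonneg) (fun n => ?_) hq
    simpa only [dist_comm] using hT q (u n) (hu n)
  exact tendsto_nhds_unique hTq hq

theorem QuasiNonexpansive.mem_fixedPoints_of_isCNMidpoint {T : X → X} (hT : QuasiNonexpansive T)
    {x y m : X} (hm : IsCNMidpoint x y m) (hx : x ∈ fixedPoints T) (hy : y ∈ fixedPoints T) :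
    m ∈ fixedPoints T := by
  have hmx : dist m x ^ 2 ≤ dist x y ^ 2 / 4 := by
    have := hm x
    rw [dist_self, dist_comm x m] at this
    linarith
  have hmy : dist m y ^ 2 ≤ dist x y ^ 2 / 4 := by
    have := hm y
    rw [dist_self, dist_comm y m, dist_comm y x] at this
    linarith
  have hTm : dist (T m) m ^ 2 ≤ 0 := by
    calc dist (T m) m ^ 2
        ≤ (dist (T m) x ^ 2 + dist (T m) y ^ 2) / 2 - dist x y ^ 2 / 4 := hm (T m)
      _ ≤ (dist m x ^ 2 + dist m y ^ 2) / 2 - dist x y ^ 2 / 4 := by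
        gcongr
        exacts [hT m x hx, hT m y hy]
      _ ≤ 0 := by linarith
  exact dist_eq_zero.1 (sq_nonpos_iff _ |>.1 hTm)

theorem MetricallyNonspreading.nonempty_fixedPoints [CompleteSpace X] (hX : HasCNMidpoints X)
    {T : X → X} (hT : MetricallyNonspreading T) {x : X}
    (hx : IsBounded (range fun n => T^[n] x)) : (fixedPoints T).Nonempty := by
  have : Nonempty X := ⟨x⟩
  obtain ⟨p, hp⟩ := hX.exists_sq_asymptoticRadius_add_sq_dist_le hx
  have hle : asymptoticRadius _ (T p) ^ 2 ≤ asymptoticRadius _ p ^ 2 :=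
    pow_le_pow_left₀ (asymptoticRadius_nonneg hx _) (hT.asymptoticRadius_map_le hx p) 2
  have hTp : dist (T p) p ^ 2 ≤ 0 := by linarith [hp (T p)]
  exact ⟨p, dist_eq_zero.1 (sq_nonpos_iff _ |>.1 hTp)⟩

theorem MetricallyNonspreading.inter_fixedPoints_nonempty [CompleteSpace X] {F : Set X}
    (hF : HasCNMidpoints F) (hFc : IsClosed F) {T : X → X} (hT : MetricallyNonspreading T)
    (hTF : MapsTo T F F) {x : X} (hxF : x ∈ F) (hx : IsBounded (range fun n => T^[n] x)) :
    (F ∩ fixedPoints T).Nonempty := by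
  have : CompleteSpace F := hFc.completeSpace_coe
  have hbdd : IsBounded (range fun n => (hTF.restrict T F F)^[n] ⟨x, hxF⟩) := by
    simpa only [Metric.isBounded_range_iff, Subtype.dist_eq, MapsTo.coe_iterate_restrict] using hx
  have hTF' : MetricallyNonspreading (hTF.restrict T F F) := fun y z => hT y z
  obtain ⟨p, hp⟩ := hTF'.nonempty_fixedPoints hF hbdd
  exact ⟨p, p.2, congrArg Subtype.val hp⟩

section Family

variable {ι : Type*} {T : ι → X → X} {s : Set ι}

theorem isClosed_biInter_fixedPoints (hT : ∀ k ∈ s, QuasiNonexpansive (T k)) :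
    IsClosed (⋂ k ∈ s, fixedPoints (T k)) :=
  isClosed_biInter fun k hk => (hT k hk).isClosed_fixedPoints

theorem HasCNMidpoints.biInter_fixedPoints (hX : HasCNMidpoints X)
    (hT : ∀ k ∈ s, QuasiNonexpansive (T k)) :
    HasCNMidpoints (⋂ k ∈ s, fixedPoints (T k) : Set X) := by
  rintro ⟨x, hx⟩ ⟨y, hy⟩
  obtain ⟨m, hm⟩ := hX x y
  rw [mem_iInter₂] at hx hy
  exact ⟨⟨m, mem_iInter₂.2 fun k hk =>
    (hT k hk).mem_fixedPoints_of_isCNMidpoint hm (hx k hk) (hy k hk)⟩, fun z => hm z⟩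

end Family

theorem stmt_8_general [CompleteSpace X] [Nonempty X] (hX : HasCNMidpoints X) {ι : Type*}
    [Finite ι] {T : ι → X → X} (hT : ∀ k, MetricallyNonspreading (T k))
    (hbdd : ∀ k, ∃ x, IsBounded (range fun n => (T k)^[n] x))
    (hcomm : ∀ j k, Function.Commute (T j) (T k)) : ∃ p, ∀ k, T k p = p := by
  have hquasi (k : ι) : QuasiNonexpansive (T k) := (hT k).quasiNonexpansive
  suffices ∀ s : Set ι, (⋂ k ∈ s, fixedPoints (T k)).Nonempty by
    obtain ⟨p, hp⟩ := this univ
    exact ⟨p, fun k => mem_iInter₂.1 hp k (mem_univ k)⟩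
  intro s
  induction s, s.toFinite using Set.Finite.induction_on with
  | empty => simp
  | @insert a s _ _ ih =>
    obtain ⟨x, hx⟩ := ih
    obtain ⟨y, hy⟩ := hbdd a
    obtain ⟨q, hq⟩ := (hT a).nonempty_fixedPoints hX hy
    rw [biInter_insert, inter_comm]
    exact (hT a).inter_fixedPoints_nonempty (hX.biInter_fixedPoints fun k _ => hquasi k)
      (isClosed_biInter_fixedPoints fun k _ => hquasi k)
      (mapsTo_biInter_fixedPoints_of_commute fun k _ => hcomm a k) hx
      ((hquasi a).isBounded_range_iterate hq x)

end Metric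

theorem hasCNMidpoints_of_convex {H : Type*} [NormedAddCommGroup H] [InnerProductSpace ℝ H]
    {C : Set H} (hC : Convex ℝ C) : HasCNMidpoints C := by
  rintro ⟨x, hx⟩ ⟨y, hy⟩
  refine ⟨⟨midpoint ℝ x y, hC.midpoint_mem hx hy⟩, fun z => ?_⟩
  have := EuclideanGeometry.dist_sq_add_dist_sq_eq_two_mul_dist_midpoint_sq_add_half_dist_sq
    (z : H) x y
  simp only [Subtype.dist_eq]
  linarith

/-- A commutative finite family of metrically nonspreading self-mappings of a nonempty
bounded closed convex subset of a real Hilbert space has a common fixed point. -/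
theorem stmt_8 {H : Type*} [NormedAddCommGroup H] [InnerProductSpace ℝ H]
    [CompleteSpace H] (C : Set H) (hC : C.Nonempty) (hCb : Bornology.IsBounded C)
    (hCc : IsClosed C) (hCv : Convex ℝ C) (m : ℕ) (T : Fin m → C → C)
    (hT : ∀ k, ∀ x y : C,
      2 * dist (T k x) (T k y) ^ 2 ≤ dist (T k x) y ^ 2 + dist (T k y) x ^ 2)
    (hcomm : ∀ j k, T j ∘ T k = T k ∘ T j) :
    ∃ p : C, ∀ k, T k p = p := by
  have : Nonempty C := hC.to_subtype
  have : CompleteSpace C := hCc.completeSpace_coe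
  have : BoundedSpace C := hCb.boundedSpace_val
  exact stmt_8_general (hasCNMidpoints_of_convex hCv) hT
    (fun _ => ⟨Classical.arbitrary C, IsBounded.all _⟩) fun j k => congrFun (hcomm j k)
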